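/- Let f: ℝ⁸ → ℝ be a Schwartz function with f(x) ≤ 0 for all ‖x‖ ≥ 1 and f̂(x) ≥ 0 for all x ∈ ℝ⁸. Then f(0) ≥ 2⁴ · f̂(0). -/

import Mathlib

open MeasureTheory FourierTransform


local notation "E8s" => EuclideanSpace ℝ (Fin 8)

lemma aux_posdef (f : SchwartzMap (EuclideanSpace ℝ (Fin 8)) ℝ)
    (hfhat : ∀ x, ∃ c : ℝ, 0 ≤ c ∧ 𝓕 (fun y => (f y : ℂ)) x = c)
    {ι : Type*} (S : Finset ι) (e : ι → E8s) (t : E8s) :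
    ∑ p ∈ S ×ˢ S, f (e p.1 - e p.2 + t) ≤ ∑ p ∈ S ×ˢ S, f (e p.1 - e p.2) := by
  set g : SchwartzMap E8s ℂ := f.postcompCLM (Complex.ofRealCLM) with hg
  have hgf : ∀ x, g x = (f x : ℂ) := fun x => rfl
  have hgf' : (g : E8s → ℂ) = fun x => (f x : ℂ) := rfl
  set F : E8s → ℂ := 𝓕 (fun y => (f y : ℂ)) with hF
  have hFi : Integrable F := (𝓕 g).integrable
  have hinv : ∀ x, (f x : ℂ) = ∫ y, ((Real.fourierChar (inner ℝ y x) : Circle) : ℂ) * F y := by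
    intro x
    have := congrFun (g.continuous.fourierInv_fourier_eq g.integrable (𝓕 g).integrable) x
    rw [Real.fourierInv_eq] at this
    rw [← hgf, ← this]
    rfl
  have hint : ∀ x, Integrable (fun y => ((Real.fourierChar (inner ℝ y x) : Circle) : ℂ) * F y) := by
    intro x
    refine hFi.bdd_mul (c := 1) ?_ ?_
    · refine Continuous.aestronglyMeasurable ?_
      have := Real.continuous_fourierChar
      fun_prop
    · exact Filter.Eventually.of_forall fun y => (Circle.norm_coe _).le
  set D : E8s → ℂ := fun y => ∑ u ∈ S, ((Real.fourierChar (inner ℝ y (e u)) : Circle) : ℂ) with hD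
  have key : ∀ t : E8s, ((∑ p ∈ S ×ˢ S, f (e p.1 - e p.2 + t) : ℝ) : ℂ)
      = ∫ y, ((Real.fourierChar (inner ℝ y t) : Circle) : ℂ) * ((‖D y‖ ^ 2 : ℝ) * F y) := by
    intro t
    push_cast
    simp_rw [hinv]
    rw [← integral_finsetSum _ (fun p _ => hint _)]
    congr 1
    ext y
    rw [← Finset.sum_mul, ← mul_assoc]
    congr 1
    have : ((‖D y‖ : ℂ) ^ 2) = D y * (starRingEnd ℂ) (D y) := (Complex.mul_conj' _).symm
    push_cast
    rw [this, hD]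
    simp only [map_sum]
    rw [Finset.sum_mul_sum, ← Finset.sum_product', Finset.mul_sum]
    refine Finset.sum_congr rfl fun p _ => ?_
    rw [inner_add_right, inner_sub_right, sub_eq_add_neg, AddChar.map_add_eq_mul,
      AddChar.map_add_eq_mul, AddChar.map_neg_eq_inv]
    push_cast
    rw [← Circle.coe_inv, Circle.coe_inv_eq_conj]
    ring
  have h0 := key 0
  simp only [add_zero, inner_zero_right, AddChar.map_zero_eq_one, Circle.coe_one, one_mul] at h0
  have hnF : ∀ y, ((‖F y‖ : ℝ) : ℂ) = F y := by
    intro y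
    obtain ⟨c, hc, h⟩ := hfhat y
    rw [h]; simp [abs_of_nonneg hc]
  have h1 : ∑ p ∈ S ×ˢ S, f (e p.1 - e p.2) = ∫ y, ‖D y‖ ^ 2 * ‖F y‖ := by
    apply Complex.ofReal_injective
    rw [h0, ← integral_complex_ofReal]
    congr 1; ext y
    push_cast
    rw [hnF]
  calc _ ≤ ‖((∑ p ∈ S ×ˢ S, f (e p.1 - e p.2 + t) : ℝ) : ℂ)‖ := by
        rw [Complex.norm_real]; exact le_abs_self _
    _ ≤ ∫ y, ‖((Real.fourierChar (inner ℝ y t) : Circle) : ℂ) * ((‖D y‖ ^ 2 : ℝ) * F y)‖ := by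
        rw [key]; exact norm_integral_le_integral_norm _
    _ = _ := by
        rw [h1]; congr 1; ext y
        rw [norm_mul, Circle.norm_coe, one_mul, norm_mul, Complex.norm_real]; simp

lemma aux_tendsto (w : Fin 8 → ℤ) :
    Filter.Tendsto (fun N : ℕ => ∏ i, (((N : ℝ) - |(w i : ℝ)|) / N)) Filter.atTop (nhds 1) := by
  have : (1 : ℝ) = ∏ i : Fin 8, 1 := by simp
  rw [this]
  refine tendsto_finsetProd _ fun i _ => ?_
  have h : Filter.Tendsto (fun N : ℕ => 1 - |(w i : ℝ)| / N) Filter.atTop (nhds (1 - 0)) :=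
    tendsto_const_nhds.sub (tendsto_const_div_atTop_nhds_zero_nat _)
  rw [sub_zero] at h
  refine h.congr' ?_
  filter_upwards [Filter.eventually_gt_atTop 0] with N hN
  have : (N : ℝ) ≠ 0 := by positivity
  field_simp

noncomputable def boxS (N : ℕ) : Finset (Fin 8 → ℤ) := Fintype.piFinset fun _ => Finset.Ico 0 (N : ℤ)

noncomputable def cN (N : ℕ) (w : Fin 8 → ℤ) : ℕ :=
  ((boxS N ×ˢ boxS N).filter (fun p => p.1 - p.2 = w)).card

lemma card_boxS (N : ℕ) : (boxS N).card = N ^ 8 := by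
  simp [boxS]

lemma cN_le (N : ℕ) (w) : cN N w ≤ N ^ 8 := by
  rw [← card_boxS]
  refine Finset.card_le_card_of_injOn Prod.snd ?_ ?_
  · intro p hp
    simp at hp
    exact hp.1.2
  · rintro ⟨a, b⟩ hp ⟨c, d⟩ hq h
    simp at hp hq h
    subst h
    have : a = c := by rw [← sub_left_inj (a := b), hp.2, hq.2]
    rw [this]

lemma le_cN (N : ℕ) (w : Fin 8 → ℤ) (hN : ∀ i, |(w i : ℝ)| ≤ N) :
    ∏ i, ((N : ℝ) - |(w i : ℝ)|) ≤ cN N w := by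
  set T : Finset (Fin 8 → ℤ) :=
    Fintype.piFinset fun i => Finset.Ico (max 0 (-w i)) (min (N : ℤ) (N - w i)) with hT
  have h1 : T.card ≤ cN N w := by
    refine Finset.card_le_card_of_injOn (fun v => (v + w, v)) ?_ ?_
    · intro v hv
      simp only [hT, Finset.mem_coe, Fintype.mem_piFinset, Finset.mem_Ico] at hv
      simp only [boxS, Finset.coe_filter, Finset.mem_product, Fintype.mem_piFinset, Finset.mem_Ico,
        Set.mem_ofPred_eq, add_sub_cancel_left, and_true, Pi.add_apply]
      exact ⟨fun i => by have := hv i; omega, fun i => by have := hv i; omega⟩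
    · intro a _ b _ h
      simpa using congrArg Prod.snd h
  refine le_trans ?_ (Nat.cast_le.mpr h1)
  rw [hT, Fintype.card_piFinset]
  push_cast
  refine Finset.prod_le_prod (fun i _ => sub_nonneg.2 (hN i)) fun i _ => ?_
  rw [Int.card_Ico]
  have : (N : ℤ) - |w i| ≤ ((min (N : ℤ) (N - w i) - max 0 (-w i)).toNat : ℤ) := by
    rcases abs_cases (w i) with h | h <;> omega
  exact_mod_cast this

lemma cN_tendsto (w : Fin 8 → ℤ) :
    Filter.Tendsto (fun N : ℕ => (cN N w : ℝ) / N ^ 8) Filter.atTop (nhds 1) := by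
  refine tendsto_of_tendsto_of_tendsto_of_le_of_le' (aux_tendsto w) tendsto_const_nhds ?_ ?_
  · have : ∀ᶠ N : ℕ in Filter.atTop, ∀ i, |(w i : ℝ)| ≤ N :=
      Filter.eventually_all.2 fun i =>
        tendsto_natCast_atTop_atTop.eventually_ge_atTop (|(w i : ℝ)|)
    filter_upwards [this] with N hN
    rw [Finset.prod_div_distrib]
    simp only [Finset.prod_const, Finset.card_univ, Fintype.card_fin]
    gcongr
    exact le_cN N w hN
  · refine Filter.Eventually.of_forall fun N => ?_
    refine div_le_one_of_le₀ ?_ (by positivity)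
    exact_mod_cast cN_le N w

lemma sum_eq_tsum (a : (Fin 8 → ℤ) → ℝ) (N : ℕ) :
    ∑ p ∈ boxS N ×ˢ boxS N, a (p.1 - p.2) = ∑' w, (cN N w : ℝ) * a w := by
  have h : ∀ p : (Fin 8 → ℤ) × (Fin 8 → ℤ), a (p.1 - p.2) =
      ∑' w, if p.1 - p.2 = w then a w else 0 := by
    intro p
    simp
  simp_rw [h]
  rw [← Summable.tsum_finsetSum]
  · congr 1; ext w
    rw [← Finset.sum_filter, Finset.sum_const, cN, nsmul_eq_mul]
  · intro p _
    exact (hasSum_single (p.1 - p.2) (fun w hw => if_neg (Ne.symm hw))).summable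

lemma avg_tendsto (a : (Fin 8 → ℤ) → ℝ) (ha : Summable a) :
    Filter.Tendsto (fun N : ℕ => (∑ p ∈ boxS N ×ˢ boxS N, a (p.1 - p.2)) / (N : ℝ) ^ 8)
      Filter.atTop (nhds (∑' w, a w)) := by
  have : ∀ N : ℕ, (∑ p ∈ boxS N ×ˢ boxS N, a (p.1 - p.2)) / (N : ℝ) ^ 8
      = ∑' w, ((cN N w : ℝ) / N ^ 8) * a w := by
    intro N
    rw [sum_eq_tsum, ← tsum_div_const]
    congr 1; ext w; ring
  simp_rw [this]
  refine tendsto_tsum_of_dominated_convergence (bound := fun w => |a w|) ha.abs ?_ ?_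
  · intro w
    simpa using (cN_tendsto w).mul_const (a w)
  · refine Filter.Eventually.of_forall fun N w => ?_
    rw [norm_mul, Real.norm_eq_abs, Real.norm_eq_abs, abs_of_nonneg (by positivity)]
    refine mul_le_of_le_one_left (abs_nonneg _) ?_
    refine div_le_one_of_le₀ ?_ (by positivity)
    exact_mod_cast cN_le N w

open scoped Pointwise in
lemma aux_main (f : SchwartzMap (EuclideanSpace ℝ (Fin 8)) ℝ)
    (hf : ∀ x, 1 ≤ ‖x‖ → f x ≤ 0)
    (hfhat : ∀ x, ∃ c : ℝ, 0 ≤ c ∧ 𝓕 (fun y => (f y : ℂ)) x = c)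
    (b : Module.Basis (Fin 8) ℝ E8s)
    (hb : ∀ n : Fin 8 → ℤ, n ≠ 0 → 1 ≤ ‖∑ i, (n i : ℝ) • b i‖) :
    ∫ x, f x ≤ volume.real (ZSpan.fundamentalDomain b) * f 0 := by
  set P := ZSpan.fundamentalDomain b with hP
  have hPfin : volume P ≠ ⊤ := (ZSpan.fundamentalDomain_isBounded b).measure_lt_top.ne
  set ε : (Fin 8 → ℤ) ≃ₗ[ℤ] Submodule.span ℤ (Set.range b) :=
    (b.restrictScalars ℤ).equivFun.symm with hε
  set e : (Fin 8 → ℤ) → E8s := fun n => (ε n : E8s) with he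
  have he_apply : ∀ n, e n = ∑ i, (n i : ℝ) • b i := by
    intro n
    simp only [he, hε, Module.Basis.equivFun_symm_apply]
    push_cast
    refine Finset.sum_congr rfl fun i _ => ?_
    rw [Module.Basis.restrictScalars_apply]
    exact (Int.cast_smul_eq_zsmul ℝ _ _).symm
  have he_sub : ∀ m n, e (m - n) = e m - e n := by
    intro m n; simp [he]
  have he0 : e 0 = 0 := by simp [he]
  set a : (Fin 8 → ℤ) → ℝ := fun n => ∫ x in P, f (e n + x) with ha
  have hsum : HasSum a (∫ x, f x) := by
    have hfd := ZSpan.isAddFundamentalDomain b (volume : Measure E8s)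
    have : VAddInvariantMeasure (Submodule.span ℤ (Set.range b)) E8s volume :=
      inferInstanceAs <| VAddInvariantMeasure (Submodule.span ℤ (Set.range b)).toAddSubgroup E8s volume
    have h2 := hfd.sum_restrict
    have h3 : HasSum (fun g : Submodule.span ℤ (Set.range b) => ∫ x in g +ᵥ P, f x) (∫ x, f x) := by
      have := hasSum_integral_measure (f := f) (μ := fun g : Submodule.span ℤ (Set.range b) => volume.restrict (g +ᵥ P))
        (by rw [h2]; exact f.integrable)
      rwa [h2] at this
    have h4 := (ε.toEquiv.hasSum_iff).2 h3
    refine Eq.subst (motive := fun q => HasSum q _) ?_ h4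
    funext n
    exact (measurePreserving_add_left volume (e n)).setIntegral_image_emb
      (measurableEmbedding_addLeft (e n)) f P
  have hbound : ∀ N : ℕ, ∑ p ∈ boxS N ×ˢ boxS N, a (p.1 - p.2) ≤
      (N : ℝ) ^ 8 * (volume.real P * f 0) := by
    intro N
    have hA0 : ∑ p ∈ boxS N ×ˢ boxS N, f (e p.1 - e p.2) ≤ (N : ℝ) ^ 8 * f 0 := by
      calc _ ≤ ∑ p ∈ boxS N ×ˢ boxS N, if p.1 = p.2 then f 0 else 0 := by
            refine Finset.sum_le_sum fun p _ => ?_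
            split_ifs with h
            · rw [h, sub_self]
            · rw [← he_sub]
              refine hf _ ?_
              rw [he_apply]
              exact hb _ (sub_ne_zero.2 h)
        _ = _ := by
            rw [Finset.sum_product]
            simp only [Finset.sum_ite_eq]
            rw [Finset.sum_congr rfl (fun x hx => if_pos hx), Finset.sum_const, card_boxS]
            simp
    have hint : ∀ w : E8s, IntegrableOn (fun x => f (w + x)) P := fun w =>
      (f.integrable.comp_add_left w).integrableOn
    calc _ = ∫ x in P, ∑ p ∈ boxS N ×ˢ boxS N, f (e p.1 - e p.2 + x) := by
          rw [integral_finsetSum _ (fun p _ => hint _)]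
          simp only [ha, he_sub]
      _ ≤ ∫ x in P, (N : ℝ) ^ 8 * f 0 := by
          refine integral_mono (integrable_finsetSum _ (fun p _ => hint _)) ?_ ?_
          · exact integrableOn_const hPfin
          · intro x
            exact (aux_posdef f hfhat (boxS N) e x).trans hA0
      _ = _ := by
          rw [setIntegral_const, smul_eq_mul]; ring
  rw [← hsum.tsum_eq]
  refine le_of_tendsto (avg_tendsto a hsum.summable) ?_
  filter_upwards [Filter.eventually_gt_atTop 0] with N hN
  rw [div_le_iff₀ (by positivity), mul_comm _ ((N : ℝ) ^ 8)]
  exact hbound N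

noncomputable def M8 : Matrix (Fin 8) (Fin 8) ℝ :=
  !![2, 0, 0, 0, 0, 0, 0, 0;
     -1, 1, 0, 0, 0, 0, 0, 0;
     0, -1, 1, 0, 0, 0, 0, 0;
     0, 0, -1, 1, 0, 0, 0, 0;
     0, 0, 0, -1, 1, 0, 0, 0;
     0, 0, 0, 0, -1, 1, 0, 0;
     0, 0, 0, 0, 0, -1, 1, 0;
     1/2, 1/2, 1/2, 1/2, 1/2, 1/2, 1/2, 1/2]

lemma M8_det : M8.det = 1 := by
  rw [Matrix.det_of_isLowerTriangular]
  · simp [Fin.prod_univ_eight, M8]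
  · intro i j h
    fin_cases i <;> fin_cases j <;> first | (exfalso; revert h; decide) | simp [M8]

noncomputable def v8 (i : Fin 8) : E8s := WithLp.toLp 2 (fun j => (√2)⁻¹ * M8 i j)

lemma v8_det : (EuclideanSpace.basisFun (Fin 8) ℝ).toBasis.det v8 = 1 / 16 := by
  rw [Module.Basis.det_apply]
  have : (EuclideanSpace.basisFun (Fin 8) ℝ).toBasis.toMatrix v8 = ((√2)⁻¹ • M8).transpose := by
    ext i j
    simp [Module.Basis.toMatrix_apply, v8]
  rw [this, Matrix.det_transpose, Matrix.det_smul, M8_det]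
  have h2 : (√2) ^ 8 = 16 := by
    rw [show (√2 : ℝ) ^ 8 = (√2 ^ 2) ^ 4 by ring, Real.sq_sqrt (by norm_num)]; norm_num
  simp [h2]

lemma v8_norm (n : Fin 8 → ℤ) : ∃ k : ℤ, ‖∑ i, (n i : ℝ) • v8 i‖ ^ 2 = k := by
  refine ⟨2 * n 0 ^ 2 + n 1 ^ 2 + n 2 ^ 2 + n 3 ^ 2 + n 4 ^ 2 + n 5 ^ 2 + n 6 ^ 2 + n 7 ^ 2
    - 2 * n 0 * n 1 - n 1 * n 2 - n 2 * n 3 - n 3 * n 4 - n 4 * n 5 - n 5 * n 6 + n 0 * n 7, ?_⟩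
  rw [EuclideanSpace.real_norm_sq_eq]
  have h : ∀ j, (∑ i, (n i : ℝ) • v8 i) j = (√2)⁻¹ * ∑ i, (n i : ℝ) * M8 i j := by
    intro j
    simp [v8, Finset.mul_sum]
    exact Finset.sum_congr rfl fun i _ => by ring
  have h2 : ((√2)⁻¹ : ℝ) ^ 2 = 1 / 2 := by
    rw [inv_pow, Real.sq_sqrt (by norm_num)]; norm_num
  simp_rw [h, mul_pow, h2]
  simp only [Fin.sum_univ_eight]
  simp [M8]
  ring

/-- If `f : ℝ⁸ → ℝ` is a Schwartz function with `f(x) ≤ 0` for `‖x‖ ≥ 1` and `f̂(x) ≥ 0`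
for all `x ∈ ℝ⁸`, then `f(0) ≥ 2⁴ · f̂(0)`. -/
theorem poisson_summation_bound (f : SchwartzMap (EuclideanSpace ℝ (Fin 8)) ℝ)
    (hf : ∀ x, 1 ≤ ‖x‖ → f x ≤ 0)
    (hfhat : ∀ x, ∃ c : ℝ, 0 ≤ c ∧ 𝓕 (fun y => (f y : ℂ)) x = c) :
    2 ^ 4 * (𝓕 (fun y => (f y : ℂ)) 0).re ≤ f 0 := by
  have hunit : IsUnit ((EuclideanSpace.basisFun (Fin 8) ℝ).toBasis.det v8) := by
    rw [v8_det]; norm_num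
  obtain ⟨hli, hsp⟩ := (Module.Basis.is_basis_iff_det _).2 hunit
  set b := Module.Basis.mk hli hsp.ge with hbdef
  have hbv : ⇑b = v8 := Module.Basis.coe_mk _ _
  have hvol : volume.real (ZSpan.fundamentalDomain b) = 1 / 16 := by
    rw [ZSpan.measureReal_fundamentalDomain b volume (EuclideanSpace.basisFun (Fin 8) ℝ).toBasis,
      hbv, v8_det, measureReal_def,
      measure_congr (ZSpan.fundamentalDomain_ae_parallelepiped _ volume),
      OrthonormalBasis.coe_toBasis, OrthonormalBasis.volume_parallelepiped]
    norm_num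
  have hb : ∀ n : Fin 8 → ℤ, n ≠ 0 → 1 ≤ ‖∑ i, (n i : ℝ) • b i‖ := by
    intro n hn
    have hne : ∑ i, (n i : ℝ) • b i ≠ 0 := by
      intro h
      apply hn
      ext i
      have := Fintype.linearIndependent_iff.1 b.linearIndependent _ h i
      exact_mod_cast this
    have hpos := norm_pos_iff.2 hne
    rw [hbv] at hpos ⊢
    obtain ⟨k, hk⟩ := v8_norm n
    have hk0 : (0 : ℝ) < k := by rw [← hk]; positivity
    have hk1 : (1 : ℝ) ≤ k := by
      have : 0 < k := by exact_mod_cast hk0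
      exact_mod_cast this
    rw [← hk] at hk1
    nlinarith
  have hmain := aux_main f hf hfhat b hb
  rw [hvol] at hmain
  have h0 : 𝓕 (fun y => (f y : ℂ)) 0 = ((∫ x, f x : ℝ) : ℂ) := by
    rw [Real.fourier_eq, ← integral_complex_ofReal]
    simp
  rw [h0, Complex.ofReal_re]
  linarith
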